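/- arXiv:2511.01422 — 4 statements merged into one kernel-verified Lean document; each statement's English description precedes it below -/
import Mathlib

section
/- Let T be a set of transpositions of Sym(n) with G(T) unicyclic and triangle-free, and let UG_n = Cay(Sym(n), T). If u1 u2 u3 u4 u1 is a 4-cycle in UG_n, then there exist pairwise distinct indices i, j, k, l ∈ {1,...,n} such that u2 = u1(ij), u3 = u2(kl), u4 = u3(ij), and u1 = u4(kl). -/
/-- Cayley graph of `Sym(n)` with connection set `T`. -/
def cayley {n : ℕ} (T : Set (Equiv.Perm (Fin n))) : SimpleGraph (Equiv.Perm (Fin n)) :=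
  SimpleGraph.fromRel fun g h => g⁻¹ * h ∈ T

/-- Transposition generating graph `G(T)` on `{1,…,n}`. -/
def transGraph {n : ℕ} (T : Set (Equiv.Perm (Fin n))) : SimpleGraph (Fin n) :=
  SimpleGraph.fromRel fun i j => Equiv.swap i j ∈ T

/-- `T` is a set of transpositions. -/
def IsTranspositionSet {n : ℕ} (T : Set (Equiv.Perm (Fin n))) : Prop :=
  ∀ t ∈ T, ∃ i j : Fin n, i ≠ j ∧ t = Equiv.swap i j

/-- A unicyclic graph: connected with exactly one cycle, equivalently
connected with as many edges as vertices. -/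
def IsUnicyclic {V : Type*} [Fintype V] (G : SimpleGraph V) : Prop :=
  G.Connected ∧ G.edgeSet.ncard = Fintype.card V

theorem aux_disj {α : Type*} [DecidableEq α] {a b c d e f g h : α}
    (hab : a ≠ b) (hcd : c ≠ d) (hac : a ≠ c) (had : a ≠ d) (hbc : b ≠ c) (hbd : b ≠ d)
    (h1 : ¬ (g = a ∧ h = b)) (h2 : ¬ (g = b ∧ h = a))
    (H : Equiv.swap a b * Equiv.swap c d = Equiv.swap g h * Equiv.swap e f) :
    ((e = a ∧ f = b) ∨ (e = b ∧ f = a)) ∧ ((g = c ∧ h = d) ∨ (g = d ∧ h = c)) := by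
  have Ha := congrArg (fun p => p a) H
  have Hb := congrArg (fun p => p b) H
  have Hc := congrArg (fun p => p c) H
  have Hd := congrArg (fun p => p d) H
  clear H
  simp only [Equiv.Perm.mul_apply, Equiv.swap_apply_def] at Ha Hb Hc Hd
  grind

theorem aux_tri {α : Type*} [DecidableEq α] {a b c e f g h : α}
    (hab : a ≠ b) (hac : a ≠ c) (hbc : b ≠ c)
    (h1 : ¬ (g = a ∧ h = b)) (h2 : ¬ (g = b ∧ h = a))
    (H : Equiv.swap a b * Equiv.swap b c = Equiv.swap g h * Equiv.swap e f) :
    (e = a ∧ f = c) ∨ (e = c ∧ f = a) ∨ (g = a ∧ h = c) ∨ (g = c ∧ h = a) := by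
  have Ha := congrArg (fun p => p a) H
  have Hb := congrArg (fun p => p b) H
  have Hc := congrArg (fun p => p c) H
  clear H
  simp only [Equiv.Perm.mul_apply, Equiv.swap_apply_def] at Ha Hb Hc
  grind

theorem aux_adj {n : ℕ} {T : Set (Equiv.Perm (Fin n))} (hT : IsTranspositionSet T)
    {u v : Equiv.Perm (Fin n)} (h : (cayley T).Adj u v) :
    ∃ a b : Fin n, a ≠ b ∧ Equiv.swap a b ∈ T ∧ v = u * Equiv.swap a b := by
  rw [cayley, SimpleGraph.fromRel_adj] at h
  obtain ⟨_, h | h⟩ := h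
  · obtain ⟨a, b, hab, e⟩ := hT _ h
    exact ⟨a, b, hab, e ▸ h, by rw [← e]; group⟩
  · obtain ⟨a, b, hab, e⟩ := hT _ h
    exact ⟨a, b, hab, e ▸ h, by rw [← Equiv.swap_inv, ← e]; group⟩

theorem aux_share {n : ℕ} {T : Set (Equiv.Perm (Fin n))}
    (htri : (transGraph T).CliqueFree 3) {a b c e f g h : Fin n}
    (hab : a ≠ b) (hac : a ≠ c) (hbc : b ≠ c)
    (t1 : Equiv.swap a b ∈ T) (t2 : Equiv.swap b c ∈ T)
    (t3 : Equiv.swap e f ∈ T) (t4 : Equiv.swap g h ∈ T)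
    (h1 : ¬ (g = a ∧ h = b)) (h2 : ¬ (g = b ∧ h = a))
    (H : Equiv.swap a b * Equiv.swap b c = Equiv.swap g h * Equiv.swap e f) : False := by
  have key : Equiv.swap a c ∈ T := by
    rcases aux_tri hab hac hbc h1 h2 H with ⟨rfl, rfl⟩ | ⟨rfl, rfl⟩ | ⟨rfl, rfl⟩ | ⟨rfl, rfl⟩
    · exact t3
    · rwa [Equiv.swap_comm]
    · exact t4
    · rwa [Equiv.swap_comm]
  refine htri {a, b, c} (SimpleGraph.is3Clique_triple_iff.2 ⟨?_, ?_, ?_⟩) <;>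
    rw [transGraph, SimpleGraph.fromRel_adj]
  · exact ⟨hab, Or.inl t1⟩
  · exact ⟨hac, Or.inl key⟩
  · exact ⟨hbc, Or.inl t2⟩

theorem stmt_3 {n : ℕ} (T : Set (Equiv.Perm (Fin n)))
    (hT : IsTranspositionSet T) (huni : IsUnicyclic (transGraph T))
    (htri : (transGraph T).CliqueFree 3)
    (u1 u2 u3 u4 : Equiv.Perm (Fin n))
    (hdist : [u1, u2, u3, u4].Pairwise (· ≠ ·))
    (h12 : (cayley T).Adj u1 u2) (h23 : (cayley T).Adj u2 u3)
    (h34 : (cayley T).Adj u3 u4) (h41 : (cayley T).Adj u4 u1) :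
    ∃ i j k l : Fin n, [i, j, k, l].Pairwise (· ≠ ·) ∧
      u2 = u1 * Equiv.swap i j ∧ u3 = u2 * Equiv.swap k l ∧
      u4 = u3 * Equiv.swap i j ∧ u1 = u4 * Equiv.swap k l := by
  obtain ⟨a, b, hab, t1, e1⟩ := aux_adj hT h12
  obtain ⟨c, d, hcd, t2, e2⟩ := aux_adj hT h23
  obtain ⟨e, f, hef, t3, e3⟩ := aux_adj hT h34
  obtain ⟨g, h, hgh, t4, e4⟩ := aux_adj hT h41
  have e4' : u4 = u1 * Equiv.swap g h := by
    rw [e4, mul_assoc, Equiv.swap_mul_self, mul_one]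
  have e3' : u3 = u4 * Equiv.swap e f := by
    rw [e3, mul_assoc, Equiv.swap_mul_self, mul_one]
  have H : Equiv.swap a b * Equiv.swap c d = Equiv.swap g h * Equiv.swap e f := by
    apply mul_left_cancel (a := u1)
    rw [← mul_assoc, ← mul_assoc, ← e1, ← e4', ← e2, ← e3']
  have n24 : u2 ≠ u4 := by
    simp only [List.pairwise_cons, List.mem_cons] at hdist
    exact hdist.2.1 _ (by simp)
  have n13 : u1 ≠ u3 := by
    simp only [List.pairwise_cons, List.mem_cons] at hdist
    exact hdist.1 _ (by simp)
  have h1 : ¬ (g = a ∧ h = b) := by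
    rintro ⟨rfl, rfl⟩
    exact n24 (e1.trans e4'.symm)
  have h2 : ¬ (g = b ∧ h = a) := by
    rintro ⟨rfl, rfl⟩
    exact n24 (e1.trans (by rw [e4', Equiv.swap_comm]))
  have h3 : ¬ (c = a ∧ d = b) := by
    rintro ⟨rfl, rfl⟩
    exact n13 (by rw [e2, e1, mul_assoc, Equiv.swap_mul_self, mul_one])
  have h4 : ¬ (c = b ∧ d = a) := by
    rintro ⟨rfl, rfl⟩
    exact n13 (by rw [e2, e1, Equiv.swap_comm d c, mul_assoc, Equiv.swap_mul_self, mul_one])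
  by_cases hbc : b = c
  · subst hbc
    exact (aux_share htri hab (fun x => h4 ⟨rfl, x.symm⟩) hcd t1 t2 t3 t4 h1 h2 H).elim
  by_cases hbd : b = d
  · subst hbd
    rw [Equiv.swap_comm c b] at t2 H
    exact (aux_share htri hab (fun x => h3 ⟨x.symm, rfl⟩) hcd.symm t1 t2 t3 t4 h1 h2 H).elim
  by_cases hac : a = c
  · subst hac
    rw [Equiv.swap_comm a b] at t1 H
    exact (aux_share htri hab.symm hbd hcd t1 t2 t3 t4 h2 h1 H).elim
  by_cases had : a = d
  · subst had
    rw [Equiv.swap_comm a b] at t1 H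
    rw [Equiv.swap_comm c a] at t2 H
    exact (aux_share htri hab.symm hbc hcd.symm t1 t2 t3 t4 h2 h1 H).elim
  obtain ⟨A, B⟩ := aux_disj hab hcd hac had hbc hbd h1 h2 H
  refine ⟨a, b, c, d, by simp [*], e1, e2, ?_, ?_⟩
  · rcases A with ⟨rfl, rfl⟩ | ⟨rfl, rfl⟩
    · exact e3
    · rw [e3, Equiv.swap_comm]
  · rcases B with ⟨rfl, rfl⟩ | ⟨rfl, rfl⟩
    · exact e4
    · rw [e4, Equiv.swap_comm]
end

section
/- Let F ⊆ V(MB_4) with |F| ≤ 5. If MB_4 − F is disconnected, then MB_4 − F has exactly two connected components, one of which is an isolated vertex. -/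
/-- The modified bubble-sort graph: the Cayley graph of `Sym(n)` generated by the
transpositions `(12),(23),…,((n-1)n),(n1)` (positions taken mod `n`). -/
def MB (n : ℕ) : SimpleGraph (Equiv.Perm (Fin n)) :=
  SimpleGraph.fromRel fun g h =>
    ∃ i : Fin n, h = g * Equiv.swap i ⟨(i.val + 1) % n, Nat.mod_lt _ i.pos⟩

namespace MBProof

/-- The generators of `MB 4`. -/
def s (i : Fin 4) : Equiv.Perm (Fin 4) :=
  Equiv.swap i ⟨(i.val + 1) % 4, Nat.mod_lt _ i.pos⟩

lemma adj_mul (g : Equiv.Perm (Fin 4)) (i : Fin 4) : (MB 4).Adj g (g * s i) := by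
  refine (SimpleGraph.fromRel_adj _ _ _).2 ⟨?_, Or.inl ⟨i, rfl⟩⟩
  intro h
  have h1 : s i = 1 := by simpa using h.symm
  have h2 : ∀ j, s j ≠ 1 := by decide
  exact h2 i h1

lemma adj_iff {g h : Equiv.Perm (Fin 4)} (hgh : (MB 4).Adj g h) : ∃ i, h = g * s i := by
  have hs : ∀ i, s i * s i = 1 := by decide
  rcases ((SimpleGraph.fromRel_adj _ _ _).1 hgh).2 with ⟨i, hi⟩ | ⟨i, hi⟩
  · exact ⟨i, hi⟩
  · refine ⟨i, ?_⟩
    change g = h * s i at hi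
    rw [hi, mul_assoc, hs, mul_one]

/-- Words in the generators, one for each vertex (breadth-first order). -/
def words : List (List (Fin 4)) :=
  [[], [0], [1], [2], [3], [0, 1], [0, 2], [0, 3], [1, 0], [1, 2], [1, 3], [2, 1], [2, 3],
   [3, 0], [3, 2], [0, 1, 0], [0, 1, 2], [0, 1, 3], [0, 2, 1], [0, 2, 3], [0, 3, 0],
   [0, 3, 2], [1, 3, 0], [0, 1, 3, 0]]

/-- The vertex with number `v`. -/
def e (v : ℕ) : Equiv.Perm (Fin 4) := ((words.getD v []).map s).prod

/-- Neighbour lists in the numbering `e`. -/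
def nbs : List (List ℕ) :=
  [[1, 2, 3, 4], [0, 5, 6, 7], [8, 0, 9, 10], [6, 11, 0, 12], [13, 10, 14, 0], [15, 1, 16, 17],
   [3, 18, 1, 19], [20, 17, 21, 1], [2, 15, 19, 21], [19, 20, 2, 16], [22, 4, 17, 2],
   [21, 3, 20, 22], [16, 22, 15, 3], [4, 16, 18, 20], [18, 21, 4, 15], [5, 8, 12, 14],
   [12, 13, 5, 9], [23, 7, 10, 5], [14, 6, 13, 23], [9, 23, 8, 6], [7, 9, 11, 13],
   [11, 14, 7, 8], [10, 12, 23, 11], [17, 19, 22, 18]]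

/-- Neighbours of vertex number `v`. -/
def nb (v : ℕ) : List ℕ := nbs.getD v []

lemma nb_spec : ∀ v < 24, ∀ w ∈ nb v, w < 24 ∧ ∃ i, e w = e v * s i := by decide +kernel

lemma e_inj : ∀ v < 24, ∀ w < 24, e v = e w → v = w := by decide +kernel

/-- Branch-and-bound: every vertex of the to-do list is put into `A` (at most `ra` more) or
into `F` (at most `rf` more); `D` is the bit mask of the vertices already placed. `true` means
that no placement exists. -/
def search : ℕ → List ℕ → ℕ → ℕ → ℕ → Bool
  | 0, _, _, _, _ => false
  | _ + 1, [], _, _, _ => false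
  | k + 1, v :: t, D, ra, rf =>
    match D.testBit v with
    | true => search k t D ra rf
    | false =>
      (match rf with
        | 0 => true
        | r + 1 => search k t (D ||| 2 ^ v) ra r) &&
      (match ra with
        | 0 => true
        | r + 1 => search k (nb v ++ t) (D ||| 2 ^ v) r rf)

lemma search_sound (SA SF : Finset ℕ) (hcl : ∀ v ∈ SA, ∀ w ∈ nb v, w ∈ SA ∨ w ∈ SF) :
    ∀ (k : ℕ) (t : List ℕ) (D ra rf : ℕ) (A F : Finset ℕ), A ⊆ SA → F ⊆ SF →
      (∀ v, D.testBit v = true ↔ v ∈ A ∨ v ∈ F) → SA.card ≤ A.card + ra →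
      SF.card ≤ F.card + rf → (∀ v ∈ t, v ∈ SA ∨ v ∈ SF) → search k t D ra rf = false := by
  intro k
  induction k with
  | zero => intros; rfl
  | succ k ih =>
    intro t D ra rf A F hA hF hD hra hrf ht
    cases t with
    | nil => rfl
    | cons v t =>
      have ht' : ∀ v ∈ t, v ∈ SA ∨ v ∈ SF := fun w hw => ht w (List.mem_cons_of_mem _ hw)
      cases hb : D.testBit v with
      | true =>
        simp only [search, hb]
        exact ih t D ra rf A F hA hF hD hra hrf ht'
      | false =>
        have hv : ¬ (v ∈ A ∨ v ∈ F) := fun h => by simp [(hD v).2 h] at hb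
        push Not at hv
        simp only [search, hb, Bool.and_eq_false_iff]
        rcases ht v List.mem_cons_self with h | h
        · right
          have hs : insert v A ⊆ SA := Finset.insert_subset h hA
          have hc := Finset.card_le_card hs
          rw [Finset.card_insert_of_notMem hv.1] at hc
          cases ra with
          | zero => omega
          | succ r =>
            refine ih _ _ _ _ (insert v A) F hs hF ?_ ?_ hrf ?_
            · intro w
              rw [Nat.testBit_or, Nat.testBit_two_pow, Bool.or_eq_true, hD, Finset.mem_insert]
              simp only [decide_eq_true_eq]
              grind
            · rw [Finset.card_insert_of_notMem hv.1]; omega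
            · intro w hw
              rcases List.mem_append.1 hw with hw | hw
              · exact hcl v h w hw
              · exact ht' w hw
        · left
          have hs : insert v F ⊆ SF := Finset.insert_subset h hF
          have hc := Finset.card_le_card hs
          rw [Finset.card_insert_of_notMem hv.2] at hc
          cases rf with
          | zero => omega
          | succ r =>
            refine ih _ _ _ _ A (insert v F) hA hs ?_ hra ?_ ht'
            · intro w
              rw [Nat.testBit_or, Nat.testBit_two_pow, Bool.or_eq_true, hD, Finset.mem_insert]
              simp only [decide_eq_true_eq]
              grind
            · rw [Finset.card_insert_of_notMem hv.2]; omega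

lemma search1 : search 100 (nb 1 ++ nb 0) 3 10 5 = true := by decide +kernel
lemma search2 : search 100 (nb 2 ++ nb 0) 5 10 5 = true := by decide +kernel
lemma search3 : search 100 (nb 3 ++ nb 0) 9 10 5 = true := by decide +kernel
lemma search4 : search 100 (nb 4 ++ nb 0) 17 10 5 = true := by decide +kernel

lemma core_edge (A F : Finset (Equiv.Perm (Fin 4)))
    (hcl : ∀ a ∈ A, ∀ i, a * s i ∈ A ∨ a * s i ∈ F) (hF : F.card ≤ 5) (hA : A.card ≤ 12)
    (h1 : 1 ∈ A) (i : Fin 4) (hi : s i ∈ A) : False := by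
  classical
  set SA := (Finset.range 24).filter (fun v => e v ∈ A) with hSA
  set SF := (Finset.range 24).filter (fun v => e v ∈ F) with hSF
  have cardA : SA.card ≤ A.card := by
    refine Finset.card_le_card_of_injOn e (fun v hv => by simp [hSA] at hv; exact hv.2) ?_
    intro v hv w hw h
    simp [hSA] at hv hw
    exact e_inj v hv.1 w hw.1 h
  have cardF : SF.card ≤ F.card := by
    refine Finset.card_le_card_of_injOn e (fun v hv => by simp [hSF] at hv; exact hv.2) ?_
    intro v hv w hw h
    simp [hSF] at hv hw
    exact e_inj v hv.1 w hw.1 h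
  have hcl' : ∀ v ∈ SA, ∀ w ∈ nb v, w ∈ SA ∨ w ∈ SF := by
    intro v hv w hw
    simp only [hSA, hSF, Finset.mem_filter, Finset.mem_range] at hv ⊢
    obtain ⟨hw24, j, hj⟩ := nb_spec v hv.1 w hw
    rw [hj]
    rcases hcl _ hv.2 j with h | h
    · exact Or.inl ⟨hw24, h⟩
    · exact Or.inr ⟨hw24, h⟩
  have h0 : 0 ∈ SA := by
    simp only [hSA, Finset.mem_filter, Finset.mem_range]
    exact ⟨by norm_num, h1⟩
  have key : ∀ j, 0 < j → j ∈ SA → search 100 (nb j ++ nb 0) (1 ||| 2 ^ j) 10 5 = false := by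
    intro j hj0 hj
    refine search_sound SA SF hcl' _ _ _ _ _ {0, j} ∅ ?_ (by simp) ?_ ?_ (by simp; omega) ?_
    · intro w hw
      simp only [Finset.mem_insert, Finset.mem_singleton] at hw
      rcases hw with rfl | rfl <;> assumption
    · intro w
      rw [Nat.testBit_or, show (1 : ℕ) = 2 ^ 0 from rfl, Nat.testBit_two_pow,
        Nat.testBit_two_pow]
      simp
      grind
    · rw [Finset.card_pair (by omega)]; omega
    · intro w hw
      rcases List.mem_append.1 hw with hw | hw
      · exact hcl' j hj w hw
      · exact hcl' 0 h0 w hw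
  have hmem : i.val + 1 ∈ SA := by
    have : e (i.val + 1) = s i := by clear * -; revert i; decide
    simp only [hSA, Finset.mem_filter, Finset.mem_range, this]
    exact ⟨by omega, hi⟩
  have hk := key _ (by omega) hmem
  fin_cases i
  · exact absurd (search1.symm.trans hk) (by simp)
  · exact absurd (search2.symm.trans hk) (by simp)
  · exact absurd (search3.symm.trans hk) (by simp)
  · exact absurd (search4.symm.trans hk) (by simp)

lemma two_nbhd : ∀ g : Equiv.Perm (Fin 4), g ≠ 1 →
    6 ≤ (Finset.univ.image s ∪ Finset.univ.image (fun i => g * s i)).card := by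
  decide +kernel

lemma core (A F : Finset (Equiv.Perm (Fin 4)))
    (hcl : ∀ a ∈ A, ∀ i, a * s i ∈ A ∨ a * s i ∈ F) (hF : F.card ≤ 5) (hA : A.card ≤ 12)
    (hA2 : 2 ≤ A.card) : False := by
  classical
  by_cases h : ∃ a ∈ A, ∃ i, a * s i ∈ A
  · obtain ⟨a, ha, i, hi⟩ := h
    refine core_edge (A.image (a⁻¹ * ·)) (F.image (a⁻¹ * ·)) ?_
      (Finset.card_image_le.trans hF) (Finset.card_image_le.trans hA)
      (Finset.mem_image.2 ⟨a, ha, by simp⟩) i (Finset.mem_image.2 ⟨_, hi, by simp⟩)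
    intro b hb j
    obtain ⟨c, hc, rfl⟩ := Finset.mem_image.1 hb
    rcases hcl c hc j with h | h
    · exact Or.inl (Finset.mem_image.2 ⟨_, h, by simp [mul_assoc]⟩)
    · exact Or.inr (Finset.mem_image.2 ⟨_, h, by simp [mul_assoc]⟩)
  · push Not at h
    obtain ⟨a, ha, b, hb, hab⟩ := Finset.one_lt_card.1 hA2
    have h6 := two_nbhd (a⁻¹ * b) (fun h => hab (by simpa using inv_mul_eq_one.1 h))
    have hle : (Finset.univ.image s ∪ Finset.univ.image (fun i => a⁻¹ * b * s i)).card
        ≤ F.card := by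
      refine Finset.card_le_card_of_injOn (a * ·) ?_ (fun x _ y _ h => mul_left_cancel h)
      intro x hx
      simp only [Finset.coe_union, Finset.coe_image, Finset.coe_univ, Set.image_univ,
        Set.mem_union, Set.mem_range] at hx
      rcases hx with ⟨i, rfl⟩ | ⟨i, rfl⟩
      · exact (hcl a ha i).resolve_left (h a ha i)
      · have := (hcl b hb i).resolve_left (h b hb i)
        simpa [mul_assoc] using this
    omega

/-- A union of components of `MB 4 - F`, or its complement, has at most one vertex. -/
lemma split (F : Set (Equiv.Perm (Fin 4))) (hF : F.ncard ≤ 5)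
    (T : Set ↥(Fᶜ)) (hT : ∀ x y, ((MB 4).induce Fᶜ).Adj x y → (x ∈ T ↔ y ∈ T)) :
    T.ncard ≤ 1 ∨ Tᶜ.ncard ≤ 1 := by
  classical
  have hsmall : ∀ T : Set ↥(Fᶜ), (∀ x y, ((MB 4).induce Fᶜ).Adj x y → (x ∈ T ↔ y ∈ T)) →
      T.ncard ≤ 12 → T.ncard ≤ 1 := by
    intro T hT h12
    by_contra h2
    have hc : (Subtype.val '' T).ncard = T.ncard :=
      Set.ncard_image_of_injective _ Subtype.val_injective
    refine core (Subtype.val '' T).toFinset F.toFinset ?_ ?_ ?_ ?_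
    · intro a ha i
      obtain ⟨x, hx, rfl⟩ := Set.mem_toFinset.1 ha
      by_cases hm : x.1 * s i ∈ F
      · exact Or.inr (Set.mem_toFinset.2 hm)
      · exact Or.inl (Set.mem_toFinset.2
          ⟨⟨_, hm⟩, (hT x ⟨_, hm⟩ (adj_mul x.1 i)).1 hx, rfl⟩)
    · rwa [← Set.ncard_eq_toFinset_card']
    · rw [← Set.ncard_eq_toFinset_card']; omega
    · rw [← Set.ncard_eq_toFinset_card']; omega
  have hsum := Set.ncard_add_ncard_compl T
  have h24 : Nat.card ↥(Fᶜ) ≤ 24 := by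
    have h1 : Nat.card ↥(Fᶜ) ≤ Nat.card (Equiv.Perm (Fin 4)) :=
      Nat.card_le_card_of_injective _ Subtype.val_injective
    have h2 : Nat.card (Equiv.Perm (Fin 4)) = 24 := by
      rw [Nat.card_eq_fintype_card, Fintype.card_perm]; rfl
    omega
  by_cases h : T.ncard ≤ 12
  · exact Or.inl (hsmall T hT h)
  · exact Or.inr (hsmall Tᶜ (fun x y hxy => not_congr (hT x y hxy)) (by omega))

end MBProof

open MBProof in
theorem stmt_12 (F : Set (Equiv.Perm (Fin 4))) (hF : F.ncard ≤ 5)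
    (hdisc : ¬ ((MB 4).induce Fᶜ).Preconnected) :
    ∃ C₁ C₂ : ((MB 4).induce Fᶜ).ConnectedComponent, C₁ ≠ C₂ ∧
      (∀ C : ((MB 4).induce Fᶜ).ConnectedComponent, C = C₁ ∨ C = C₂) ∧
      C₂.supp.ncard = 1 := by
  classical
  set H := (MB 4).induce Fᶜ with hH
  have hcomp : ∀ (C : H.ConnectedComponent) (x y), H.Adj x y → (x ∈ C.supp ↔ y ∈ C.supp) := by
    intro C x y hxy
    rw [SimpleGraph.ConnectedComponent.mem_supp_iff, SimpleGraph.ConnectedComponent.mem_supp_iff,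
      SimpleGraph.ConnectedComponent.connectedComponentMk_eq_of_adj hxy]
  have hdisj : ∀ C D : H.ConnectedComponent, C ≠ D → D.supp ⊆ C.suppᶜ := by
    intro C D hCD x hx hx'
    exact hCD (((SimpleGraph.ConnectedComponent.mem_supp_iff _ _).1 hx').symm.trans
      ((SimpleGraph.ConnectedComponent.mem_supp_iff _ _).1 hx))
  have hpos : ∀ C : H.ConnectedComponent, 0 < C.supp.ncard := fun C =>
    (Set.ncard_pos (Set.toFinite _)).2 C.nonempty_supp
  have hex : ∃ C₁ C₂ : H.ConnectedComponent, C₁ ≠ C₂ ∧ C₂.supp.ncard = 1 := by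
    unfold SimpleGraph.Preconnected at hdisc
    push Not at hdisc
    obtain ⟨u, v, huv⟩ := hdisc
    have hne : H.connectedComponentMk u ≠ H.connectedComponentMk v := fun h =>
      huv (SimpleGraph.ConnectedComponent.eq.1 h)
    rcases split F hF _ (hcomp (H.connectedComponentMk u)) with h | h
    · exact ⟨_, _, hne.symm, by have := hpos (H.connectedComponentMk u); omega⟩
    · refine ⟨_, _, hne, ?_⟩
      have h1 := Set.ncard_le_ncard (hdisj _ _ hne) (Set.toFinite _)
      have := hpos (H.connectedComponentMk v)
      omega
  obtain ⟨C₁, C₂, hne, h1⟩ := hex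
  refine ⟨C₁, C₂, hne, ?_, h1⟩
  intro C
  by_contra hC
  push Not at hC
  obtain ⟨hC1, hC2⟩ := hC
  have hpair : ∀ D E : H.ConnectedComponent, D ≠ C₂ → E ≠ C₂ → D ≠ E →
      (D.supp ∪ C₂.supp)ᶜ.ncard ≤ 1 := by
    intro D E hD _ _
    refine (split F hF (D.supp ∪ C₂.supp) ?_).resolve_left ?_
    · intro x y hxy
      rw [Set.mem_union, Set.mem_union, hcomp D x y hxy, hcomp C₂ x y hxy]
    · rw [Set.ncard_union_eq
        (Set.disjoint_left.2 fun x hx hx' => hdisj _ _ hD hx' |> fun h => h hx)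
        (Set.toFinite _) (Set.toFinite _)]
      have := hpos D
      omega
  have hA := hpair C₁ C hne hC2 hC1.symm
  have hB := hpair C C₁ hC2 hne hC1
  have hC₁ : C₁.supp.ncard ≤ 1 := by
    refine (Set.ncard_le_ncard ?_ (Set.toFinite _)).trans hB
    rw [Set.compl_union]
    exact Set.subset_inter (hdisj _ _ hC1) (hdisj _ _ hne.symm)
  have hU := Set.ncard_union_le C₁.supp C₂.supp
  have hsum := Set.ncard_add_ncard_compl (C₁.supp ∪ C₂.supp)
  have hFs := Set.ncard_add_ncard_compl F
  have h24 : Nat.card (Equiv.Perm (Fin 4)) = 24 := by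
    rw [Nat.card_eq_fintype_card, Fintype.card_perm]; rfl
  have hcard : Nat.card ↥(Fᶜ) = Fᶜ.ncard := Nat.card_coe_set_eq _
  omega
end

section
/- Let F ⊆ V(MB_4) with |F| ≤ 6. If MB_4 − F is disconnected, then MB_4 − F has a connected component C with |V(C)| ≥ 24 − |F| − 2. -/
/-- The `i`-th generator of `MB 4`. -/
def tgen (i : Fin 4) : Equiv.Perm (Fin 4) :=
  Equiv.swap i ⟨(i.val + 1) % 4, Nat.mod_lt _ i.pos⟩

/-- Lexicographic rank of a permutation of four points. -/
def idx (x : Equiv.Perm (Fin 4)) : ℕ :=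
  (x 0).val * 6 + ((x 1).val - (if (x 0).val < (x 1).val then 1 else 0)) * 2
    + (if (x 3).val < (x 2).val then 1 else 0)

/-- Packed adjacency table: 24 rows of 24 bits. -/
def tbl : ℕ := 94681236171606387455049873384087228202873379000169895652331583110684921270969649161503250171747874566767286350778165106679690790163251190258436359230483369382836652715540550

/-- Neighbourhood bit mask. -/
def nb (v : ℕ) : ℕ := (tbl >>> (24 * v)) % 16777216

theorem nb_idx : ∀ x : Equiv.Perm (Fin 4), nb (idx x) =
    2 ^ idx (x * tgen 0) ||| 2 ^ idx (x * tgen 1) ||| 2 ^ idx (x * tgen 2)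
      ||| 2 ^ idx (x * tgen 3) := by decide +kernel

theorem idx_inj : ∀ x y : Equiv.Perm (Fin 4), idx x = idx y → x = y := by decide +kernel

theorem idx_lt : ∀ x : Equiv.Perm (Fin 4), idx x < 24 := by decide +kernel

/-- Exhaustive search. `a`, `b` bound the undecided elements of `S` and `F`; `D` is the mask of
decided vertices, `B` the mask of undecided vertices that must be in `S` or `F`. -/
def chk : ℕ → ℕ → ℕ → ℕ → ℕ → Bool
  | 0, _, _, _, _ => false
  | n + 1, a, b, D, B =>
    bif Nat.beq B 0 then
      Nat.ble 7 a && (List.range 24).all fun v =>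
        D.testBit v || chk n (a - 1) b (D ||| 2 ^ v) ((nb v ||| (D ||| 2 ^ v)) ^^^ (D ||| 2 ^ v))
    else
      (Nat.beq a 0 || chk n (a - 1) b (D ||| 2 ^ B.log2)
        (((B ||| nb B.log2) ||| (D ||| 2 ^ B.log2)) ^^^ (D ||| 2 ^ B.log2)))
      && (Nat.beq b 0 || chk n a (b - 1) (D ||| 2 ^ B.log2)
        ((B ||| (D ||| 2 ^ B.log2)) ^^^ (D ||| 2 ^ B.log2)))

theorem chk_start : chk 20 8 6 1 (nb 0) = true := by decide +kernel

/-- The undecided part of a set. -/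
def und (S : Finset ℕ) (D : ℕ) : Finset ℕ := S.filter fun j => D.testBit j = false

theorem und_step {S : Finset ℕ} {D v : ℕ} (hv : v ∈ S) (hD : D.testBit v = false) :
    (und S (D ||| 2 ^ v)).card + 1 = (und S D).card := by
  have h : und S (D ||| 2 ^ v) = (und S D).erase v := by
    ext j
    simp only [und, Finset.mem_filter, Finset.mem_erase, Nat.testBit_or, Nat.testBit_two_pow,
      Bool.or_eq_false_iff, decide_eq_false_iff_not]
    constructor
    · rintro ⟨h1, h2, h3⟩
      exact ⟨fun h => h3 h.symm, h1, h2⟩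
    · rintro ⟨h1, h2, h3⟩
      exact ⟨h2, h3, fun h => h1 h.symm⟩
  rw [h, Finset.card_erase_add_one]
  simp [und, hv, hD]

theorem und_le (S : Finset ℕ) (D v : ℕ) : (und S (D ||| 2 ^ v)).card ≤ (und S D).card := by
  apply Finset.card_le_card
  intro j
  simp only [und, Finset.mem_filter, Nat.testBit_or, Bool.or_eq_false_iff]
  tauto

theorem und_same {S : Finset ℕ} {D v : ℕ} (hv : v ∉ S) : und S (D ||| 2 ^ v) = und S D := by
  ext j
  simp only [und, Finset.mem_filter, Nat.testBit_or, Bool.or_eq_false_iff, Nat.testBit_two_pow,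
    decide_eq_false_iff_not]
  constructor
  · tauto
  · rintro ⟨h1, h2⟩
    exact ⟨h1, h2, fun h => hv (h ▸ h1)⟩

theorem testBit_diff (X D j : ℕ) :
    ((X ||| D) ^^^ D).testBit j = true ↔ X.testBit j = true ∧ D.testBit j = false := by
  rw [Nat.testBit_xor, Nat.testBit_or]
  cases X.testBit j <;> cases D.testBit j <;> simp

theorem chk_sound (S F : Finset ℕ) (hlt : ∀ i ∈ S, i < 24)
    (H : ∀ i ∈ S, ∀ j, (nb i).testBit j = true → j ∈ S ∨ j ∈ F) :
    ∀ n a b D B, chk n a b D B = true → a - 6 ≤ (und S D).card → (und S D).card ≤ a →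
      (und F D).card ≤ b →
      (∀ j, B.testBit j = true → D.testBit j = false ∧ (j ∈ S ∨ j ∈ F)) → False := by
  intro n
  induction n with
  | zero => intro a b D B h; simp [chk] at h
  | succ n ih =>
    intro a b D B h h1 h2 h3 h4
    rw [chk] at h
    by_cases hB : B = 0
    · subst hB
      have hB' : Nat.beq 0 0 = true := rfl
      rw [hB'] at h
      simp only [cond_true, Bool.and_eq_true, List.all_eq_true, List.mem_range,
        Bool.or_eq_true, Nat.ble_eq] at h
      obtain ⟨ha, h⟩ := h
      have hne : (und S D).Nonempty := by
        rw [← Finset.card_pos]; omega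
      obtain ⟨v, hv⟩ := hne
      simp only [und, Finset.mem_filter] at hv
      have hs := und_step hv.1 hv.2
      rcases h v (hlt v hv.1) with h | h
      · rw [hv.2] at h; simp at h
      · refine ih _ _ _ _ h (by omega) (by omega) ((und_le F D v).trans h3) ?_
        intro j hj
        rw [testBit_diff] at hj
        exact ⟨hj.2, H v hv.1 j hj.1⟩
    · have hB' : Nat.beq B 0 = false := by
        rw [Bool.eq_false_iff]; intro h'; exact hB (Nat.eq_of_beq_eq_true h')
      rw [hB'] at h
      simp only [cond_false, Bool.and_eq_true, Bool.or_eq_true, Nat.beq_eq] at h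
      obtain ⟨hS, hF⟩ := h
      obtain ⟨hvD, hv⟩ := h4 _ (Nat.testBit_log2 hB)
      generalize B.log2 = v at *
      by_cases hvS : v ∈ S
      · have hs := und_step hvS hvD
        rcases hS with hS | hS
        · omega
        · refine ih _ _ _ _ hS (by omega) (by omega) ((und_le F D v).trans h3) ?_
          intro j hj
          rw [testBit_diff, Nat.testBit_or, Bool.or_eq_true] at hj
          refine ⟨hj.2, ?_⟩
          rcases hj.1 with hj | hj
          · exact (h4 j hj).2
          · exact H v hvS j hj
      · have hvF : v ∈ F := hv.resolve_left hvS
        have hs := und_step hvF hvD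
        rcases hF with hF | hF
        · omega
        · refine ih _ _ _ _ hF (by rw [und_same hvS]; exact h1) (by rw [und_same hvS]; exact h2)
            (by omega) ?_
          intro j hj
          rw [testBit_diff] at hj
          exact ⟨hj.2, (h4 j hj.1).2⟩

theorem key_one (S F : Finset (Equiv.Perm (Fin 4))) (h1 : 1 ∈ S) (h3 : 3 ≤ S.card)
    (h9 : S.card ≤ 9) (hF : F.card ≤ 6)
    (H : ∀ x ∈ S, ∀ i, x * tgen i ∈ S ∨ x * tgen i ∈ F) : False := by
  have hinj : Function.Injective idx := fun x y => idx_inj x y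
  have hS : (S.image idx).card = S.card := Finset.card_image_of_injective _ hinj
  have hFc : (F.image idx).card = F.card := Finset.card_image_of_injective _ hinj
  have i1 : idx 1 = 0 := by decide +kernel
  have h0 : 0 ∈ S.image idx := Finset.mem_image.2 ⟨1, h1, i1⟩
  have Hc : ∀ i ∈ S.image idx, ∀ j, (nb i).testBit j = true →
      j ∈ S.image idx ∨ j ∈ F.image idx := by
    intro i hi j hj
    obtain ⟨x, hx, rfl⟩ := Finset.mem_image.1 hi
    rw [nb_idx] at hj
    simp only [Nat.testBit_or, Nat.testBit_two_pow, Bool.or_eq_true, decide_eq_true_eq] at hj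
    have : ∃ i, idx (x * tgen i) = j := by
      rcases hj with ((hj | hj) | hj) | hj <;> exact ⟨_, hj⟩
    obtain ⟨i, rfl⟩ := this
    exact (H x hx i).imp (Finset.mem_image_of_mem _) (Finset.mem_image_of_mem _)
  have hz : und (S.image idx) 0 = S.image idx := by simp [und]
  have hzF : und (F.image idx) 0 = F.image idx := by simp [und]
  have hs := und_step h0 (D := 0) (by simp)
  have hf := und_le (F.image idx) 0 0
  have e : (0 ||| 2 ^ 0 : ℕ) = 1 := by decide
  rw [e, hz] at hs
  rw [e, hzF] at hf
  refine chk_sound (S.image idx) (F.image idx) ?_ Hc _ _ _ _ _ chk_start (by omega) (by omega)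
    (by omega) ?_
  · intro i hi
    obtain ⟨x, hx, rfl⟩ := Finset.mem_image.1 hi
    exact idx_lt x
  · intro j hj
    refine ⟨?_, Hc 0 h0 j hj⟩
    rcases Nat.eq_zero_or_pos j with rfl | hp
    · exact absurd hj (by decide +kernel)
    · have : (2 ^ 0).testBit j = false := by
        rw [Nat.testBit_two_pow, decide_eq_false_iff_not]; omega
      exact this

theorem key (S F : Finset (Equiv.Perm (Fin 4))) (h3 : 3 ≤ S.card)
    (h9 : S.card ≤ 9) (hF : F.card ≤ 6)
    (H : ∀ x ∈ S, ∀ i, x * tgen i ∈ S ∨ x * tgen i ∈ F) : False := by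
  have hne : S.Nonempty := by rw [← Finset.card_pos]; omega
  obtain ⟨g, hg⟩ := hne
  have hinj : Function.Injective (fun x : Equiv.Perm (Fin 4) => g⁻¹ * x) := mul_right_injective _
  refine key_one (S.image (g⁻¹ * ·)) (F.image (g⁻¹ * ·)) ?_ ?_ ?_ ?_ ?_
  · exact Finset.mem_image.2 ⟨g, hg, by simp⟩
  · rwa [Finset.card_image_of_injective _ hinj]
  · rwa [Finset.card_image_of_injective _ hinj]
  · rwa [Finset.card_image_of_injective _ hinj]
  · intro x hx i
    obtain ⟨y, hy, rfl⟩ := Finset.mem_image.1 hx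
    refine (H y hy i).imp (fun h => ?_) (fun h => ?_) <;>
      exact Finset.mem_image.2 ⟨_, h, by simp [mul_assoc]⟩

/-- A set of at least three vertices, at most half of what is left, cannot be cut off. -/
theorem key_half (S F : Finset (Equiv.Perm (Fin 4))) (h3 : 3 ≤ S.card)
    (h2 : 2 * S.card + F.card ≤ 24) (hF : F.card ≤ 6)
    (H : ∀ x ∈ S, ∀ i, x * tgen i ∈ S ∨ x * tgen i ∈ F) : False := by
  by_cases h9 : S.card ≤ 9
  · exact key S F h3 h9 hF H
  · obtain ⟨S', hS', hc⟩ := Finset.exists_subset_card_eq (show 9 ≤ S.card by omega)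
    have hd : (S \ S').card = S.card - 9 := by rw [Finset.card_sdiff_of_subset hS', hc]
    have hu := Finset.card_union_le F (S \ S')
    refine key S' (F ∪ (S \ S')) (by omega) (by omega) (by omega) ?_
    intro x hx i
    rcases H x (hS' hx) i with h | h
    · by_cases h' : x * tgen i ∈ S'
      · exact Or.inl h'
      · exact Or.inr (by simp [h, h'])
    · exact Or.inr (by simp [h])

theorem mb_adj (x : Equiv.Perm (Fin 4)) (i : Fin 4) : (MB 4).Adj x (x * tgen i) := by
  rw [MB, SimpleGraph.fromRel_adj]
  refine ⟨?_, Or.inl ⟨i, rfl⟩⟩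
  intro h
  have h1 : tgen i = 1 := by simpa using h
  clear h
  revert i
  decide +kernel

open Classical in
/-- Two complementary parts with no edges between them: one has at most two vertices. -/
theorem two_parts (F Z : Finset (Equiv.Perm (Fin 4))) (hF : F.card ≤ 6) (hd : Disjoint Z F)
    (hZ : 3 ≤ Z.card) (hT : Z.card + F.card + 3 ≤ 24)
    (H : ∀ x ∉ F, ∀ y ∉ F, (MB 4).Adj x y → (x ∈ Z ↔ y ∈ Z)) : False := by
  have hc : (Finset.univ : Finset (Equiv.Perm (Fin 4))).card = 24 := by
    simp [Fintype.card_perm, Nat.factorial]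
  have hu : (Z ∪ F).card = Z.card + F.card := Finset.card_union_of_disjoint hd
  have hT' : ((Z ∪ F)ᶜ).card = 24 - (Z.card + F.card) := by
    rw [Finset.card_compl, hu, ← Finset.card_univ, hc]
  by_cases h : 2 * Z.card + F.card ≤ 24
  · refine key_half Z F hZ h hF ?_
    intro x hx i
    by_cases hy : x * tgen i ∈ F
    · exact Or.inr hy
    · exact Or.inl ((H x (Finset.disjoint_left.1 hd hx) _ hy (mb_adj x i)).1 hx)
  · refine key_half (Z ∪ F)ᶜ F (by omega) (by omega) hF ?_
    intro x hx i
    simp only [Finset.mem_compl, Finset.mem_union, not_or] at hx ⊢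
    by_cases hy : x * tgen i ∈ F
    · exact Or.inr hy
    · exact Or.inl ⟨fun h => hx.1 ((H x hx.2 _ hy (mb_adj x i)).2 h), hy⟩

theorem stmt_13 (F : Set (Equiv.Perm (Fin 4))) (hF : F.ncard ≤ 6)
    (hdisc : ¬ ((MB 4).induce Fᶜ).Preconnected) :
    ∃ C : ((MB 4).induce Fᶜ).ConnectedComponent,
      24 - F.ncard - 2 ≤ C.supp.ncard := by
  classical
  by_contra hcon
  push Not at hcon
  have hFc : F.toFinset.card = F.ncard := (Set.ncard_eq_toFinset_card' F).symm
  have hc : Nat.card (Equiv.Perm (Fin 4)) = 24 := by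
    simp [Fintype.card_perm, Nat.factorial]
  have hV : (Fᶜ).ncard = 24 - F.ncard := by rw [Set.ncard_compl, hc]
  -- closed sets of surviving vertices
  let P : Finset ↥(Fᶜ) → Prop := fun Z => 3 ≤ Z.card ∧
    ∀ x y, ((MB 4).induce Fᶜ).Adj x y → (x ∈ Z ↔ y ∈ Z)
  have huniv : (Finset.univ : Finset ↥(Fᶜ)).card = 24 - F.ncard := by
    rw [Finset.card_univ, ← Nat.card_eq_fintype_card, ← hV]; rfl
  have hex : ∃ n, ∃ Z, P Z ∧ Z.card = n :=
    ⟨_, Finset.univ, ⟨by omega, by simp⟩, rfl⟩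
  obtain ⟨Z, ⟨hZ3, hZc⟩, hZn⟩ := Nat.find_spec hex
  have hmin : ∀ Y, P Y → Z.card ≤ Y.card := fun Y hY => by
    rw [hZn]; exact Nat.find_min' hex ⟨Y, hY, rfl⟩
  by_cases hT : Z.card + F.ncard + 3 ≤ 24
  · refine two_parts F.toFinset (Z.map (Function.Embedding.subtype _)) (by omega) ?_ (by simpa)
      (by rw [Finset.card_map]; omega) ?_
    · rw [Finset.disjoint_left]
      intro x hx
      obtain ⟨y, hy, rfl⟩ := Finset.mem_map.1 hx
      exact fun h => y.2 (Set.mem_toFinset.1 h)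
    · intro x hx y hy hxy
      have hx' : x ∈ Fᶜ := by simpa using hx
      have hy' : y ∈ Fᶜ := by simpa using hy
      have := hZc ⟨x, hx'⟩ ⟨y, hy'⟩ hxy
      simp only [Finset.mem_map, Function.Embedding.coe_subtype, Subtype.exists,
        exists_and_right, exists_eq_right]
      constructor
      · rintro ⟨_, h⟩; exact ⟨hy', this.1 h⟩
      · rintro ⟨_, h⟩; exact ⟨hx', this.2 h⟩
  · have hne : Z.Nonempty := by rw [← Finset.card_pos]; omega
    obtain ⟨x, hx⟩ := hne
    let C := ((MB 4).induce Fᶜ).connectedComponentMk x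
    let Y : Finset ↥(Fᶜ) := Finset.univ.filter fun y => y ∈ C.supp
    have hYc : ∀ u v, ((MB 4).induce Fᶜ).Adj u v → (u ∈ Y ↔ v ∈ Y) := by
      intro u v huv
      simp only [Y, Finset.mem_filter, Finset.mem_univ, true_and,
        SimpleGraph.ConnectedComponent.mem_supp_iff]
      rw [SimpleGraph.ConnectedComponent.connectedComponentMk_eq_of_adj huv]
    have hYcard : Y.card = C.supp.ncard := by
      rw [← Set.ncard_coe_finset]; congr 1; ext; simp [Y]
    have hYlt := hcon C
    have hY : Y.card < 3 := by
      by_contra h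
      have := hmin Y ⟨by omega, hYc⟩
      omega
    have hW : Z.card ≤ (Z \ Y).card := by
      apply hmin
      have := Finset.le_card_sdiff Y Z
      refine ⟨by omega, fun u v huv => ?_⟩
      simp only [Finset.mem_sdiff, hZc u v huv, hYc u v huv]
    have hlt : (Z \ Y).card < Z.card := by
      apply Finset.card_lt_card
      refine ⟨Finset.sdiff_subset, fun h => ?_⟩
      have := h hx
      simp [Y, C] at this
    omega
end

section
/- Let F ⊆ V(MB_4) with |F| ≤ 7. If MB_4 − F is disconnected, then MB_4 − F has a connected component C with |V(C)| ≥ 24 − |F| − 3. -/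
/-! Search on bit masks -/

/-- population count of a four-bit number -/
def nib (d : ℕ) : ℕ :=
  Nat.mod (Nat.shiftRight 4841987667533046032 (Nat.mul 4 (Nat.mod d 16))) 16

/-- population count of a 24-bit number -/
def pc (x : ℕ) : ℕ :=
  Nat.add (nib x) (Nat.add (nib (Nat.shiftRight x 4)) (Nat.add (nib (Nat.shiftRight x 8))
    (Nat.add (nib (Nat.shiftRight x 12)) (Nat.add (nib (Nat.shiftRight x 16))
      (nib (Nat.shiftRight x 20))))))

/-- masks of the complements of the closed neighbourhoods -/
def nc (v : ℕ) : ℕ :=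
  List.getD [14679992, 16744300, 8384498, 16768467, 16383949, 16250823, 16252478, 16767805,
    12565695, 16741623, 15659903, 14676447, 16486395, 16699255, 15675135, 16596477, 12377087,
    8159215, 14938095, 11796383, 13351935, 5240830, 3604223, 1966075] v 0

/-- mask of the complement of a single vertex -/
def vc (v : ℕ) : ℕ := Nat.sub 16777215 (Nat.shiftLeft 1 v)

/-- bit test -/
def hasBit (x v : ℕ) : Bool := Nat.beq (Nat.land 1 (Nat.shiftRight x v)) 1

/-- the current partial assignment is already impossible -/
def pruned (PS PT : ℕ) : Bool :=
  or (Nat.ble (pc (Nat.lor PS PT)) 16) (or (Nat.ble (pc PS) 3) (Nat.ble (pc PT) 6))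

/-- branching search: each vertex goes to `S`, to `T` or to `F` -/
def search (l : List ℕ) : ℕ → ℕ → Bool :=
  List.rec pruned (fun v _ k PS PT =>
    or (pruned PS PT)
      (and (or (not (hasBit PS v)) (k PS (Nat.land PT (nc v))))
        (and (or (not (hasBit PT v)) (k (Nat.land PS (nc v)) PT))
          (k (Nat.land PS (vc v)) (Nat.land PT (vc v)))))) l

theorem search_true : search
    [21, 10, 1, 22, 2, 8, 12, 18, 5, 7, 3, 14, 16, 17, 11, 15, 6, 23, 9, 19, 20, 4, 13]
    16777215 14679992 = true := by
  decide +kernel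

theorem nib_eq (y : ℕ) : nib y = (y.testBit 0).toNat + (y.testBit 1).toNat
    + (y.testBit 2).toNat + (y.testBit 3).toNat := by
  have key : ∀ d < 16, nib d = (d.testBit 0).toNat + (d.testBit 1).toNat
    + (d.testBit 2).toNat + (d.testBit 3).toNat := by decide
  have h := key (y % 16) (Nat.mod_lt _ (by norm_num))
  have h2 : nib (y % 16) = nib y := by
    unfold nib
    rw [show Nat.mod (y % 16) 16 = Nat.mod y 16 from Nat.mod_mod y 16]
  have t : ∀ j < 4, (y % 16).testBit j = y.testBit j := by
    intro j hj
    rw [show (16 : ℕ) = 2 ^ 4 by norm_num, Nat.testBit_mod_two_pow]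
    simp [hj]
  rw [h2, t 0 (by norm_num), t 1 (by norm_num), t 2 (by norm_num), t 3 (by norm_num)] at h
  exact h

theorem pc_eq (x : ℕ) : pc x = ∑ i ∈ Finset.range 24, (x.testBit i).toNat := by
  have e : pc x = nib x + (nib (x >>> 4) + (nib (x >>> 8) + (nib (x >>> 12) +
    (nib (x >>> 16) + nib (x >>> 20))))) := rfl
  rw [e]
  simp only [nib_eq, Finset.sum_range_succ, Finset.sum_range_zero, Nat.testBit_shiftRight]
  simp only [Nat.reduceAdd]
  ring

theorem card_le_pc (S : Finset ℕ) (x : ℕ) (h : ∀ i ∈ S, i < 24)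
    (hx : ∀ i ∈ S, x.testBit i = true) : S.card ≤ pc x := by
  rw [pc_eq, Finset.card_eq_sum_ones]
  calc ∑ i ∈ S, 1 = ∑ i ∈ S, (x.testBit i).toNat :=
        Finset.sum_congr rfl fun i hi => by rw [hx i hi]; rfl
    _ ≤ _ := Finset.sum_le_sum_of_subset fun i hi => Finset.mem_range.2 (h i hi)

theorem vc_bit : ∀ v < 24, ∀ j < 24, j ≠ v → (vc v).testBit j = true := by decide +kernel

theorem hasBit_eq (x v : ℕ) (h : x.testBit v = true) : hasBit x v = true := by
  unfold hasBit
  have : (1 &&& (x >>> v)) = 1 := by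
    rw [Nat.testBit, bne_iff_ne] at h
    have h2 : (1 &&& (x >>> v)) = (x >>> v) % 2 := by
      rw [Nat.and_comm, Nat.and_one_is_mod]
    omega
  exact Nat.beq_eq.symm ▸ this

theorem not_pruned (S T : Finset ℕ) (hS : ∀ i ∈ S, i < 24) (hT : ∀ i ∈ T, i < 24)
    (hd : Disjoint S T)
    (c1 : 4 ≤ S.card) (c2 : 7 ≤ T.card) (c3 : 17 ≤ S.card + T.card)
    (PS PT : ℕ) (a : ∀ i ∈ S, PS.testBit i = true)
    (b : ∀ i ∈ T, PT.testBit i = true) : pruned PS PT = false := by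
  have e1 := card_le_pc S PS hS a
  have e2 := card_le_pc T PT hT b
  have e3 : (S ∪ T).card ≤ pc (PS ||| PT) := card_le_pc _ _
    (fun i hi => (Finset.mem_union.1 hi).elim (hS i) (hT i))
    (fun i hi => by
      rw [Nat.testBit_or]
      rcases Finset.mem_union.1 hi with h | h
      · rw [a i h]; rfl
      · rw [b i h]; simp)
  rw [Finset.card_union_of_disjoint hd] at e3
  have f1 : Nat.ble (pc (Nat.lor PS PT)) 16 = false := by
    rw [Bool.eq_false_iff]; intro h
    have : pc (PS ||| PT) ≤ 16 := Nat.le_of_ble_eq_true h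
    omega
  have f2 : Nat.ble (pc PS) 3 = false := by
    rw [Bool.eq_false_iff]; intro h
    have := Nat.le_of_ble_eq_true h
    omega
  have f3 : Nat.ble (pc PT) 6 = false := by
    rw [Bool.eq_false_iff]; intro h
    have := Nat.le_of_ble_eq_true h
    omega
  unfold pruned
  rw [f1, f2, f3]; rfl

theorem search_sound (S T : Finset ℕ) (hS : ∀ i ∈ S, i < 24) (hT : ∀ i ∈ T, i < 24)
    (hd : Disjoint S T)
    (h1 : ∀ i ∈ S, ∀ j ∈ T, (nc i).testBit j = true)
    (h2 : ∀ i ∈ S, ∀ j ∈ T, (nc j).testBit i = true)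
    (c1 : 4 ≤ S.card) (c2 : 7 ≤ T.card) (c3 : 17 ≤ S.card + T.card)
    (l : List ℕ) (hl : ∀ v ∈ l, v < 24) : ∀ PS PT : ℕ,
    (∀ i ∈ S, PS.testBit i = true) → (∀ i ∈ T, PT.testBit i = true) →
    search l PS PT = false := by
  induction l with
  | nil => exact fun PS PT a b => not_pruned S T hS hT hd c1 c2 c3 PS PT a b
  | cons v l ih =>
    intro PS PT a b
    have ih := ih fun v hv => hl v (List.mem_cons_of_mem _ hv)
    have hv := hl v List.mem_cons_self
    have np := not_pruned S T hS hT hd c1 c2 c3 PS PT a b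
    have e : search (v :: l) PS PT = or (pruned PS PT)
      (and (or (not (hasBit PS v)) (search l PS (PT &&& nc v)))
        (and (or (not (hasBit PT v)) (search l (PS &&& nc v) PT))
          (search l (PS &&& vc v) (PT &&& vc v)))) := rfl
    rw [e, np]
    by_cases vS : v ∈ S
    · rw [hasBit_eq _ _ (a v vS), ih PS (PT &&& nc v) a
        (fun j hj => by rw [Nat.testBit_and, b j hj, h1 v vS j hj]; rfl)]
      simp
    by_cases vT : v ∈ T
    · rw [hasBit_eq _ _ (b v vT), ih (PS &&& nc v) PT
        (fun j hj => by rw [Nat.testBit_and, a j hj, h2 j hj v vT]; rfl) b]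
      simp
    · rw [ih (PS &&& vc v) (PT &&& vc v)
        (fun j hj => by
          rw [Nat.testBit_and, a j hj, vc_bit v hv j (hS j hj) (fun h => vS (h ▸ hj))]; rfl)
        (fun j hj => by
          rw [Nat.testBit_and, b j hj, vc_bit v hv j (hT j hj) (fun h => vT (h ▸ hj))]; rfl)]
      simp

/-- lexicographic rank of a permutation -/
def code (s : Equiv.Perm (Fin 4)) : ℕ :=
  6 * (s 0).val + 2 * ((s 1).val - if s 0 < s 1 then 1 else 0) + if s 3 < s 2 then 1 else 0

theorem code_lt : ∀ s, code s < 24 := by decide +kernel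
theorem code_inj : ∀ s t, code s = code t → s = t := by decide +kernel
theorem code_one : code 1 = 0 := by decide +kernel

theorem code_adj' : ∀ s t : Equiv.Perm (Fin 4), (nc (code s)).testBit (code t) = false →
    s = t ∨ ∃ i : Fin 4, t = s * Equiv.swap i ⟨(i.val + 1) % 4, Nat.mod_lt _ i.pos⟩ := by
  decide +kernel

theorem code_adj (s t : Equiv.Perm (Fin 4)) (hn : s ≠ t) (h : ¬ (MB 4).Adj s t) :
    (nc (code s)).testBit (code t) = true := by
  by_contra hc
  rw [Bool.not_eq_true] at hc
  rcases code_adj' s t hc with h' | h'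
  · exact hn h'
  · apply h
    rw [MB, SimpleGraph.fromRel_adj]
    exact ⟨hn, Or.inl h'⟩

theorem adj_mul (g s t : Equiv.Perm (Fin 4)) (h : (MB 4).Adj (g * s) (g * t)) :
    (MB 4).Adj s t := by
  rw [MB, SimpleGraph.fromRel_adj] at h ⊢
  obtain ⟨h0, h⟩ := h
  refine ⟨fun e => h0 (by rw [e]), ?_⟩
  rcases h with ⟨i, h⟩ | ⟨i, h⟩
  · exact Or.inl ⟨i, by rw [mul_assoc] at h; exact mul_left_cancel h⟩
  · exact Or.inr ⟨i, by rw [mul_assoc] at h; exact mul_left_cancel h⟩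

theorem core_one (S T : Finset (Equiv.Perm (Fin 4))) (hd : Disjoint S T)
    (ha : ∀ s ∈ S, ∀ t ∈ T, ¬ (MB 4).Adj s t) (one : 1 ∈ S)
    (c1 : 4 ≤ S.card) (c2 : 7 ≤ T.card) (c3 : 17 ≤ S.card + T.card) : False := by
  have inj : Function.Injective code := fun s t => code_inj s t
  have hne : ∀ s ∈ S, ∀ t ∈ T, s ≠ t := fun s hs t ht => Finset.disjoint_iff_ne.1 hd s hs t ht
  have h1 : ∀ i ∈ S.image code, ∀ j ∈ T.image code, (nc i).testBit j = true := by
    intro i hi j hj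
    obtain ⟨s, hs, rfl⟩ := Finset.mem_image.1 hi
    obtain ⟨t, ht, rfl⟩ := Finset.mem_image.1 hj
    exact code_adj s t (hne s hs t ht) (ha s hs t ht)
  have h2 : ∀ i ∈ S.image code, ∀ j ∈ T.image code, (nc j).testBit i = true := by
    intro i hi j hj
    obtain ⟨s, hs, rfl⟩ := Finset.mem_image.1 hi
    obtain ⟨t, ht, rfl⟩ := Finset.mem_image.1 hj
    exact code_adj t s (hne s hs t ht).symm (fun h => ha s hs t ht h.symm)
  have lt : ∀ X : Finset (Equiv.Perm (Fin 4)), ∀ i ∈ X.image code, i < 24 := by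
    intro X i hi
    obtain ⟨s, hs, rfl⟩ := Finset.mem_image.1 hi
    exact code_lt s
  have key := search_sound (S.image code) (T.image code) (lt S) (lt T)
    ((Finset.disjoint_image inj).2 hd) h1 h2
    (by rwa [Finset.card_image_of_injective _ inj])
    (by rwa [Finset.card_image_of_injective _ inj])
    (by rwa [Finset.card_image_of_injective _ inj, Finset.card_image_of_injective _ inj])
    [21, 10, 1, 22, 2, 8, 12, 18, 5, 7, 3, 14, 16, 17, 11, 15, 6, 23, 9, 19, 20, 4, 13]
    (by decide) 16777215 14679992
    (fun i hi => by
      rw [show 16777215 = 2 ^ 24 - 1 by norm_num, Nat.testBit_two_pow_sub_one]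
      simpa using lt S i hi)
    (fun j hj => h1 0 (Finset.mem_image.2 ⟨1, one, code_one⟩) j hj)
  rw [search_true] at key
  exact Bool.noConfusion key

theorem core (S T : Finset (Equiv.Perm (Fin 4))) (hd : Disjoint S T)
    (ha : ∀ s ∈ S, ∀ t ∈ T, ¬ (MB 4).Adj s t)
    (c1 : 4 ≤ S.card) (c2 : 7 ≤ T.card) (c3 : 17 ≤ S.card + T.card) : False := by
  obtain ⟨g, hg⟩ : S.Nonempty := Finset.card_pos.1 (by omega)
  have inj : Function.Injective (fun s : Equiv.Perm (Fin 4) => g⁻¹ * s) :=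
    mul_right_injective _
  apply core_one (S.image fun s => g⁻¹ * s) (T.image fun s => g⁻¹ * s)
    ((Finset.disjoint_image inj).2 hd)
  · intro s hs t ht
    obtain ⟨s, hsm, rfl⟩ := Finset.mem_image.1 hs
    obtain ⟨t, htm, rfl⟩ := Finset.mem_image.1 ht
    exact fun h => ha s hsm t htm (adj_mul _ _ _ h)
  · exact Finset.mem_image.2 ⟨g, hg, by simp⟩
  · rwa [Finset.card_image_of_injective _ inj]
  · rwa [Finset.card_image_of_injective _ inj]
  · rwa [Finset.card_image_of_injective _ inj, Finset.card_image_of_injective _ inj]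

theorem core_symm (S T : Finset (Equiv.Perm (Fin 4))) (hd : Disjoint S T)
    (ha : ∀ s ∈ S, ∀ t ∈ T, ¬ (MB 4).Adj s t)
    (c1 : 4 ≤ S.card) (c2 : 4 ≤ T.card) (c3 : 17 ≤ S.card + T.card) : False := by
  rcases le_total S.card T.card with h | h
  · exact core S T hd ha c1 (by omega) c3
  · exact core T S hd.symm (fun s hs t ht h => ha t ht s hs h.symm) c2 (by omega) (by omega)

open Classical in
/-- A map whose fibres all miss at least four points has a union of fibres of size at least four
whose complement has size at least four as well. -/
theorem exists_split {W K : Type*} [Fintype W] (f : W → K)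
    (hn : 17 ≤ Fintype.card W)
    (hk : ∀ k, (Finset.univ.filter fun w => f w = k).card + 4 ≤ Fintype.card W) :
    ∃ A : Finset K, 4 ≤ (Finset.univ.filter fun w => f w ∈ A).card ∧
      (Finset.univ.filter fun w => f w ∈ A).card + 4 ≤ Fintype.card W := by
  by_cases h : ∃ k, 4 ≤ (Finset.univ.filter fun w => f w = k).card
  · obtain ⟨k, h⟩ := h
    exact ⟨{k}, by simpa using h, by simpa using hk k⟩
  push Not at h
  have key : ∀ A : Finset K, (Finset.univ.filter fun w => f w ∈ A).card ≤ 3 ∨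
      ∃ B : Finset K, 4 ≤ (Finset.univ.filter fun w => f w ∈ B).card ∧
        (Finset.univ.filter fun w => f w ∈ B).card ≤ 6 := by
    intro A
    induction A using Finset.induction_on with
    | empty => left; simp
    | insert k A hkA ih =>
      rcases ih with ih | ih
      · have e : (Finset.univ.filter fun w => f w ∈ insert k A) ⊆
          (Finset.univ.filter fun w => f w = k) ∪ (Finset.univ.filter fun w => f w ∈ A) := by
          intro w hw
          simpa using hw
        have e1 := (Finset.card_le_card e).trans (Finset.card_union_le _ _)
        have e2 := h k
        by_cases h4 : (Finset.univ.filter fun w => f w ∈ insert k A).card ≤ 3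
        · exact Or.inl h4
        · exact Or.inr ⟨insert k A, by omega, by omega⟩
      · exact Or.inr ih
  rcases key (Finset.univ.image f) with h | ⟨B, h3, h4⟩
  · exfalso
    have : (Finset.univ.filter fun w => f w ∈ Finset.univ.image f) = Finset.univ := by
      ext w; simp
    rw [this, Finset.card_univ] at h
    omega
  · exact ⟨B, h3, by omega⟩

theorem stmt_14 (F : Set (Equiv.Perm (Fin 4))) (hF : F.ncard ≤ 7)
    (hdisc : ¬ ((MB 4).induce Fᶜ).Preconnected) :
    ∃ C : ((MB 4).induce Fᶜ).ConnectedComponent,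
      24 - F.ncard - 3 ≤ C.supp.ncard := by
  classical
  by_contra hcon
  push Not at hcon
  have hcard : F.ncard + Fintype.card (Fᶜ : Set (Equiv.Perm (Fin 4))) = 24 := by
    have h := Set.ncard_add_ncard_compl F
    rw [Nat.card_eq_fintype_card, Fintype.card_perm, Fintype.card_fin,
      show Nat.factorial 4 = 24 from rfl] at h
    rw [← Nat.card_eq_fintype_card, Nat.card_coe_set_eq]
    exact h
  obtain ⟨A, h1, h2⟩ := exists_split ((MB 4).induce Fᶜ).connectedComponentMk (by omega) (by
    intro C
    have h := hcon C
    have e : C.supp.ncard =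
        (Finset.univ.filter fun w => ((MB 4).induce Fᶜ).connectedComponentMk w = C).card := by
      rw [← Set.ncard_coe_finset]
      congr 1
      ext w
      simp
    omega)
  have h3 := Finset.card_filter_add_card_filter_not
    (s := (Finset.univ : Finset (Fᶜ : Set (Equiv.Perm (Fin 4)))))
    (fun w => ((MB 4).induce Fᶜ).connectedComponentMk w ∈ A)
  rw [Finset.card_univ] at h3
  have inj : Function.Injective (Subtype.val : (Fᶜ : Set (Equiv.Perm (Fin 4))) → _) :=
    Subtype.val_injective
  apply core_symm
    ((Finset.univ.filter fun w => ((MB 4).induce Fᶜ).connectedComponentMk w ∈ A).image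
      Subtype.val)
    ((Finset.univ.filter fun w => ¬ ((MB 4).induce Fᶜ).connectedComponentMk w ∈ A).image
      Subtype.val)
  · rw [Finset.disjoint_image inj]
    exact Finset.disjoint_filter_filter_not _ _ _
  · intro s hs t ht hadj
    obtain ⟨s, hsm, rfl⟩ := Finset.mem_image.1 hs
    obtain ⟨t, htm, rfl⟩ := Finset.mem_image.1 ht
    have hs := (Finset.mem_filter.1 hsm).2
    have ht := (Finset.mem_filter.1 htm).2
    have hst : ((MB 4).induce Fᶜ).Adj s t := hadj
    rw [SimpleGraph.ConnectedComponent.eq.2 hst.reachable] at hs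
    exact ht hs
  · rwa [Finset.card_image_of_injective _ inj]
  · rw [Finset.card_image_of_injective _ inj]; omega
  · rw [Finset.card_image_of_injective _ inj, Finset.card_image_of_injective _ inj]; omega
end
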